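/- arXiv:1802.00969 — 2 statements merged into one kernel-verified Lean document; each statement's English description precedes it below -/
import Mathlib

section
/- Let V and W be H-modules, each finite-dimensional over F and indecomposable, and assume V and W are not isomorphic as H-modules. Then for all H-linear maps f : V → W and g : W → V, the composite g ∘ f lies in the Jacobson radical of End_H(V); in particular g ∘ f is not a unit of End_H(V). -/
/-- An `H`-module `M` is indecomposable if it is nonzero and whenever `p` and `q` are
complementary submodules, one of them is trivial. -/
def IsIndecomposableModule (H : Type*) [Ring H] (M : Type*) [AddCommGroup M]
    [Module H M] : Prop :=
  (∃ x : M, x ≠ 0) ∧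
    ∀ p q : Submodule H M, p ⊓ q = ⊥ → p ⊔ q = ⊤ → p = ⊥ ∨ q = ⊥

/-! By Fitting's lemma every endomorphism of `V` is nilpotent or invertible, so `End_H(V)` is local,
and an element of a local ring lies in the Jacobson radical as soon as it has no left inverse.
A left inverse `e` of `g ∘ f` would make `f` a split monomorphism with retraction `e ∘ g`, hence
`W = range f ⊕ ker (e ∘ g)`; as `W` is indecomposable and `f ≠ 0`, `f` would be an isomorphism. -/

theorem mem_jacobson_bot_of_forall_mul_ne_one {R : Type*} [Ring R] [IsLocalRing R] {x : R}
    (hx : ∀ y, y * x ≠ 1) : x ∈ (⊥ : Ideal R).jacobson := by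
  refine Ideal.mem_jacobson_iff.mpr fun y => ?_
  have hyx : ¬ IsUnit (-(y * x)) := fun hu => by
    obtain ⟨z, hz⟩ := hu.neg.exists_left_inv
    exact hx (z * y) (by rw [mul_assoc, ← neg_neg (y * x), hz])
  have hunit : IsUnit (y * x + 1) :=
    (IsLocalRing.isUnit_or_isUnit_of_add_one (neg_add_cancel_left (y * x) 1)).resolve_left hyx
  obtain ⟨z, hz⟩ := hunit.exists_left_inv
  exact ⟨z, by rw [Ideal.mem_bot, mul_assoc, ← mul_add_one, hz, sub_self]⟩

section Modules

variable {H V W : Type*} [Ring H] [AddCommGroup V] [Module H V] [AddCommGroup W] [Module H W]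

theorem isCompl_range_ker_of_comp_eq_id {f : V →ₗ[H] W} {e : W →ₗ[H] V}
    (hef : e.comp f = LinearMap.id) : IsCompl (LinearMap.range f) (LinearMap.ker e) := by
  have hleft : Function.LeftInverse e f := LinearMap.congr_fun hef
  have hidem : IsIdempotentElem (f.comp e : Module.End H W) :=
    LinearMap.ext fun w => congrArg f (hleft (e w))
  have hrange : LinearMap.range (f.comp e) = LinearMap.range f :=
    LinearMap.range_comp_of_range_eq_top f (LinearMap.range_eq_top.mpr hleft.surjective)
  have hker : LinearMap.ker (f.comp e) = LinearMap.ker e :=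
    LinearMap.ker_comp_of_ker_eq_bot e (LinearMap.ker_eq_bot.mpr hleft.injective)
  simpa only [hrange, hker] using LinearMap.IsIdempotentElem.isCompl hidem

namespace IsIndecomposableModule

theorem nontrivial (hV : IsIndecomposableModule H V) : Nontrivial V :=
  let ⟨x, hx⟩ := hV.1
  nontrivial_of_ne x 0 hx

theorem eq_bot_or_eq_bot_of_isCompl (hV : IsIndecomposableModule H V) {p q : Submodule H V}
    (hpq : IsCompl p q) : p = ⊥ ∨ q = ⊥ :=
  hV.2 p q hpq.inf_eq_bot hpq.sup_eq_top

theorem bijective_of_comp_eq_id [Nontrivial V] (hW : IsIndecomposableModule H W)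
    {f : V →ₗ[H] W} {e : W →ₗ[H] V} (hef : e.comp f = LinearMap.id) : Function.Bijective f := by
  have hcompl := isCompl_range_ker_of_comp_eq_id hef
  have hinj : Function.Injective f :=
    Function.LeftInverse.injective (LinearMap.congr_fun hef)
  refine ⟨hinj, LinearMap.range_eq_top.mp ?_⟩
  rcases hW.eq_bot_or_eq_bot_of_isCompl hcompl with hrange | hker
  · obtain ⟨v, hv⟩ := exists_ne (0 : V)
    have hfv : f v = 0 := LinearMap.congr_fun (LinearMap.range_eq_bot.mp hrange) v
    exact absurd ((map_eq_zero_iff f hinj).mp hfv) hv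
  · exact eq_top_of_isCompl_bot (hker ▸ hcompl)

theorem isNilpotent_or_isUnit [IsNoetherian H V] [IsArtinian H V]
    (hV : IsIndecomposableModule H V) (φ : Module.End H V) : IsNilpotent φ ∨ IsUnit φ := by
  obtain ⟨n, hcompl, hn⟩ :=
    (φ.eventually_isCompl_ker_pow_range_pow.and (Filter.eventually_ne_atTop 0)).exists
  rcases hV.eq_bot_or_eq_bot_of_isCompl hcompl with hker | hrange
  · have htop : LinearMap.range (φ ^ n) = ⊤ := eq_top_of_bot_isCompl (hker ▸ hcompl)
    have hpow : IsUnit (φ ^ n) := (Module.End.isUnit_iff _).mpr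
      ⟨LinearMap.ker_eq_bot.mp hker, LinearMap.range_eq_top.mp htop⟩
    exact Or.inr ((isUnit_pow_iff hn).mp hpow)
  · exact Or.inl ⟨n, LinearMap.range_eq_bot.mp hrange⟩

theorem isLocalRing_end [IsNoetherian H V] [IsArtinian H V]
    (hV : IsIndecomposableModule H V) : IsLocalRing (Module.End H V) :=
  have := hV.nontrivial
  .of_isUnit_or_isUnit_one_sub_self fun φ =>
    (hV.isNilpotent_or_isUnit φ).symm.imp_right IsNilpotent.isUnit_one_sub

theorem isLocalRing_end_of_finite (A : Type*) [Ring A] [IsArtinianRing A] [SMul A H]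
    [Module A V] [IsScalarTower A H V] [Module.Finite A V] (hV : IsIndecomposableModule H V) :
    IsLocalRing (Module.End H V) :=
  have : IsNoetherian H V := isNoetherian_of_tower A inferInstance
  have : IsArtinian H V := isArtinian_of_tower A inferInstance
  hV.isLocalRing_end

end IsIndecomposableModule

theorem stmt2_general [IsLocalRing (Module.End H V)] (hW : IsIndecomposableModule H W)
    (hniso : ¬ Nonempty (V ≃ₗ[H] W)) (f : V →ₗ[H] W) (g : W →ₗ[H] V) :
    ((g.comp f : Module.End H V) ∈ (⊥ : Ideal (Module.End H V)).jacobson) ∧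
      ¬ IsUnit (g.comp f : Module.End H V) := by
  have : Nontrivial V :=
    let ⟨v, hv⟩ := DFunLike.ne_iff.mp (one_ne_zero (α := Module.End H V))
    nontrivial_of_ne _ _ hv
  have hno_left_inv (e : Module.End H V) : e * g.comp f ≠ 1 := fun he =>
    have hf : Function.Bijective f := hW.bijective_of_comp_eq_id (e := e.comp g) he
    hniso ⟨LinearEquiv.ofBijective f hf⟩
  refine ⟨mem_jacobson_bot_of_forall_mul_ne_one hno_left_inv, fun hunit => ?_⟩
  obtain ⟨e, he⟩ := hunit.exists_left_inv
  exact hno_left_inv e he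

end Modules

theorem stmt2 (F : Type*) [Field F] (H : Type*) [Ring H] [Algebra F H]
    (V W : Type*)
    [AddCommGroup V] [Module H V] [Module F V] [IsScalarTower F H V] [FiniteDimensional F V]
    [AddCommGroup W] [Module H W] [Module F W] [IsScalarTower F H W] [FiniteDimensional F W]
    (hV : IsIndecomposableModule H V) (hW : IsIndecomposableModule H W)
    (hniso : ¬ Nonempty (V ≃ₗ[H] W))
    (f : V →ₗ[H] W) (g : W →ₗ[H] V) :
    ((g.comp f : Module.End H V) ∈ (⊥ : Ideal (Module.End H V)).jacobson) ∧
      ¬ IsUnit (g.comp f : Module.End H V) := by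
  have := hV.isLocalRing_end_of_finite F
  exact stmt2_general hW hniso f g
end

section
/- Let V_1, …, V_n be pairwise non-isomorphic H-modules, each finite-dimensional over F and indecomposable. Let m, s : Fin n → ℕ and suppose the H-modules V^(m) = ⨁_{(i,k) : Σ i, Fin (m i)} V_i and V^(s) = ⨁_{(i,k) : Σ i, Fin (s i)} V_i are isomorphic as H-modules. Then m = s. -/
/-!
Fix a module `M` with local endomorphism ring. The homomorphisms `N → M` that are not split
surjections form an `End M`-submodule of `Hom(N, M)`. If `End N` is local too, the quotient by it is
simple when `M ≃ N` and zero otherwise, so for a direct sum of modules with local endomorphism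
rings its length counts the summands isomorphic to `M`. This length depends only on the isomorphism
class of the direct sum. Indecomposable modules of finite length have local endomorphism rings by
Fitting's lemma.
-/

open scoped DirectSum

section LocalRing

variable {E : Type*} [Ring E] [IsLocalRing E]

theorem eq_zero_or_eq_one_of_isIdempotentElem {e : E} (he : IsIdempotentElem e) :
    e = 0 ∨ e = 1 := by
  rcases IsLocalRing.isUnit_or_isUnit_of_add_one (add_sub_cancel e 1) with h | h
  · exact .inr ((IsIdempotentElem.iff_eq_one_of_isUnit h).mp he)
  · exact .inl (sub_eq_self.mp ((IsIdempotentElem.iff_eq_one_of_isUnit h).mp he.one_sub))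

instance isDedekindFiniteMonoid_of_isLocalRing : IsDedekindFiniteMonoid E where
  mul_eq_one_symm {a b} hab := by
    have hba : IsIdempotentElem (b * a) := by
      rw [IsIdempotentElem, mul_assoc, ← mul_assoc a, hab, one_mul]
    refine (eq_zero_or_eq_one_of_isIdempotentElem hba).resolve_left fun h0 ↦ one_ne_zero (α := E) ?_
    calc (1 : E) = a * (b * a) * b := by rw [← mul_assoc, hab, one_mul, hab]
      _ = 0 := by rw [h0, mul_zero, zero_mul]

end LocalRing

section FiniteLength

variable {H M : Type*} [Ring H] [AddCommGroup M] [Module H M] [IsNoetherian H M] [IsArtinian H M]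

namespace IsIndecomposableModule

theorem isUnit_or_isNilpotent (hM : IsIndecomposableModule H M) (f : Module.End H M) :
    IsUnit f ∨ IsNilpotent f := by
  obtain ⟨k, hk, hk0⟩ :=
    (f.eventually_isCompl_ker_pow_range_pow.and (Filter.eventually_ne_atTop 0)).exists
  rcases hM.2 _ _ hk.inf_eq_bot hk.sup_eq_top with hker | hrange
  · left
    rw [← isUnit_pow_iff hk0, Module.End.isUnit_iff]
    exact ⟨LinearMap.ker_eq_bot.mp hker,
      LinearMap.range_eq_top.mp (by simpa [hker] using hk.sup_eq_top)⟩
  · exact .inr ⟨k, LinearMap.range_eq_bot.mp hrange⟩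

theorem isLocalRing_end_s3 (hM : IsIndecomposableModule H M) : IsLocalRing (Module.End H M) := by
  obtain ⟨x, hx⟩ := hM.1
  have : Nontrivial M := ⟨x, 0, hx⟩
  exact .of_isUnit_or_isUnit_one_sub_self fun f ↦
    (hM.isUnit_or_isNilpotent f).imp_right IsNilpotent.isUnit_one_sub

end IsIndecomposableModule

end FiniteLength

theorem IsIndecomposableModule.isLocalRing_end_of_finiteDimensional (F : Type*) {H M : Type*}
    [Field F] [Ring H] [Algebra F H] [AddCommGroup M] [Module H M] [Module F M]
    [IsScalarTower F H M] [FiniteDimensional F M] (hM : IsIndecomposableModule H M) :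
    IsLocalRing (Module.End H M) :=
  have : IsNoetherian H M := isNoetherian_of_tower F inferInstance
  have : IsArtinian H M := isArtinian_of_tower F inferInstance
  hM.isLocalRing_end_s3

section Multiplicity

variable {H N N' M : Type*} [Ring H] [AddCommGroup N] [Module H N] [AddCommGroup N'] [Module H N']
  [AddCommGroup M] [Module H M]

theorem nontrivial_of_nontrivial_end [Nontrivial (Module.End H M)] : Nontrivial M :=
  have ⟨f, hf⟩ := exists_ne (0 : Module.End H M)
  have ⟨x, hx⟩ := DFunLike.ne_iff.mp hf
  ⟨f x, 0, hx⟩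

theorem bijective_of_isUnit_comp [Nontrivial M] [IsLocalRing (Module.End H N)] {f : N →ₗ[H] M}
    {g : M →ₗ[H] N} (hfg : IsUnit (f ∘ₗ g : Module.End H M)) : Function.Bijective f := by
  obtain ⟨u, hu⟩ := hfg.exists_right_inv
  have hsplit (x : M) : f (g (u x)) = x := LinearMap.congr_fun hu x
  have hidem : IsIdempotentElem (g ∘ₗ u ∘ₗ f : Module.End H N) :=
    LinearMap.ext fun y ↦ congrArg (g ∘ₗ u) (hsplit (f y))
  have hne : (g ∘ₗ u ∘ₗ f : Module.End H N) ≠ 0 := by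
    intro h0
    obtain ⟨x, hx⟩ := exists_ne (0 : M)
    refine hx ?_
    calc x = f (g (u (f (g (u x))))) := by rw [hsplit, hsplit]
      _ = f 0 := congrArg f (LinearMap.congr_fun h0 (g (u x)))
      _ = 0 := map_zero f
  have hone := (eq_zero_or_eq_one_of_isIdempotentElem hidem).resolve_left hne
  exact ⟨Function.LeftInverse.injective (g := g ∘ₗ u) (LinearMap.congr_fun hone),
    fun x ↦ ⟨g (u x), hsplit x⟩⟩

section Radical

variable [IsLocalRing (Module.End H M)]

variable (H N M) in
/-- The radical of `Hom(N, M)` for `M` with local endomorphism ring: the homomorphisms `N → M` that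
are not split surjections, as a left module over the endomorphism ring of `M`. -/
def homRadical : Submodule (Module.End H M) (N →ₗ[H] M) where
  carrier := {f | ∀ g : M →ₗ[H] N, ¬ IsUnit (f ∘ₗ g : Module.End H M)}
  zero_mem' g := by simp
  add_mem' {f₁ f₂} h₁ h₂ g := by
    rw [LinearMap.add_comp]
    exact IsLocalRing.nonunits_add (h₁ g) (h₂ g)
  smul_mem' a f hf g h := hf g (isUnit_of_mul_isUnit_right (x := a) h)

theorem mem_homRadical {f : N →ₗ[H] M} :
    f ∈ homRadical H N M ↔ ∀ g : M →ₗ[H] N, ¬ IsUnit (f ∘ₗ g : Module.End H M) :=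
  Iff.rfl

theorem comp_mem_homRadical {f : N →ₗ[H] M} (hf : f ∈ homRadical H N M) (h : N' →ₗ[H] N) :
    f ∘ₗ h ∈ homRadical H N' M :=
  fun g ↦ hf (h ∘ₗ g)

theorem homRadical_eq_top [IsLocalRing (Module.End H N)] (hMN : ¬ Nonempty (M ≃ₗ[H] N)) :
    homRadical H N M = ⊤ := by
  have : Nontrivial M := nontrivial_of_nontrivial_end (H := H)
  exact eq_top_iff.mpr fun f _ g hfg ↦
    hMN ⟨(LinearEquiv.ofBijective f (bijective_of_isUnit_comp hfg)).symm⟩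

theorem isCoatom_homRadical (e : M ≃ₗ[H] N) : IsCoatom (homRadical H N M) := by
  refine ⟨fun htop ↦ ?_, fun p hp ↦ eq_top_iff.mpr fun h _ ↦ ?_⟩
  · have he : e.symm.toLinearMap ∈ homRadical H N M := htop ▸ Submodule.mem_top
    exact he e.toLinearMap (e.symm_comp ▸ isUnit_one)
  · obtain ⟨f, hfp, hf⟩ := SetLike.exists_of_lt hp
    simp only [mem_homRadical, not_forall, not_not] at hf
    obtain ⟨g, hfg⟩ := hf
    have hfe : IsUnit (f ∘ₗ e : Module.End H M) := by
      refine isUnit_of_mul_isUnit_left (y := (e.symm ∘ₗ g : Module.End H M)) ?_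
      convert hfg
      ext x
      simp
    obtain ⟨u, hu⟩ := hfe.exists_left_inv
    have hfac : h = (h ∘ₗ e ∘ₗ u : Module.End H M) • f := by
      ext y
      have huf : u (f y) = e.symm y := by simpa using LinearMap.congr_fun hu (e.symm y)
      simp [huf]
    exact hfac ▸ p.smul_mem _ hfp

variable {P : Type*} {W : P → Type*} [∀ p, AddCommGroup (W p)] [∀ p, Module H (W p)]

theorem mem_homRadical_directSum [DecidableEq P] {f : (⨁ p, W p) →ₗ[H] M} :
    f ∈ homRadical H (⨁ p, W p) M ↔ ∀ p, f ∘ₗ DirectSum.lof H P W p ∈ homRadical H (W p) M := by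
  classical
  refine ⟨fun hf p ↦ comp_mem_homRadical hf _, fun hf g hfg ↦ ?_⟩
  have : Nontrivial M := nontrivial_of_nontrivial_end (H := H)
  obtain ⟨x, hx⟩ := exists_ne (0 : M)
  -- `a` keeps the finitely many summands met by `g x`, so that `f ∘ₗ g - a` kills `x`.
  let a : Module.End H M := ∑ p ∈ (g x).support,
    (f ∘ₗ DirectSum.lof H P W p) ∘ₗ (DirectSum.component H P W p ∘ₗ g)
  have hax : a x = (f ∘ₗ g) x := by
    rw [LinearMap.sum_apply]
    exact (map_sum f _ _).symm.trans (congrArg f (DirectSum.sum_support_of (g x)))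
  have ha : ¬ IsUnit a := fun ha ↦
    have ⟨p, _, hp⟩ := IsLocalRing.exists_of_isUnit_sum ha
    hf p _ hp
  have hsub : ¬ IsUnit (f ∘ₗ g - a) := fun hsub ↦
    hx (((Module.End.isUnit_iff _).mp hsub).1 (by simp [hax]))
  exact IsLocalRing.nonunits_add ha hsub (by rwa [add_sub_cancel])

variable (H N M) in
/-- The multiplicity of `M` as a direct summand of `N`, for `M` with local endomorphism ring: the
length of `Hom(N, M)` modulo its radical. -/
noncomputable def summandMultiplicity : ℕ∞ :=
  Module.length (Module.End H M) ((N →ₗ[H] M) ⧸ homRadical H N M)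

theorem summandMultiplicity_congr (e : N ≃ₗ[H] N') :
    summandMultiplicity H N M = summandMultiplicity H N' M := by
  refine (Submodule.Quotient.equiv _ _ (e.congrLeft M (Module.End H M)) ?_).length_eq
  ext f
  rw [Submodule.mem_map_equiv]
  refine ⟨fun hf ↦ ?_, fun hf ↦ comp_mem_homRadical hf e.toLinearMap⟩
  convert comp_mem_homRadical hf e.symm.toLinearMap
  ext x
  simp

theorem summandMultiplicity_eq_one (e : M ≃ₗ[H] N) : summandMultiplicity H N M = 1 :=
  Module.length_eq_one_iff.mpr (isSimpleModule_iff_isCoatom.mpr (isCoatom_homRadical e))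

/-- Restriction to the summands `W p` with `p ∈ S`, modulo the radicals. -/
def restrictModRadical [DecidableEq P] (S : Finset P) :
    ((⨁ p, W p) →ₗ[H] M) →ₗ[Module.End H M] ∀ p : S, (W p →ₗ[H] M) ⧸ homRadical H (W p) M :=
  .pi fun p ↦ (homRadical H (W p) M).mkQ ∘ₗ
    LinearMap.lcomp (Module.End H M) M (DirectSum.lof H P W p)

theorem restrictModRadical_surjective [DecidableEq P] (S : Finset P) :
    Function.Surjective (restrictModRadical (H := H) (M := M) (W := W) S) := by
  intro q
  choose h hh using fun p ↦ Submodule.mkQ_surjective _ (q p)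
  refine ⟨DirectSum.toModule H P M fun p ↦ if hp : p ∈ S then h ⟨p, hp⟩ else 0,
    funext fun p ↦ (congrArg (homRadical H (W p) M).mkQ ?_).trans (hh p)⟩
  ext x
  simp

theorem ker_restrictModRadical [DecidableEq P] [∀ p, IsLocalRing (Module.End H (W p))]
    {S : Finset P} (hS : ∀ p, Nonempty (M ≃ₗ[H] W p) → p ∈ S) :
    LinearMap.ker (restrictModRadical S) = homRadical H (⨁ p, W p) M := by
  ext f
  rw [mem_homRadical_directSum, LinearMap.mem_ker, funext_iff, Subtype.forall]
  refine forall_congr' fun p ↦ ⟨fun hp ↦ ?_, fun hp _ ↦ (Submodule.Quotient.mk_eq_zero _).mpr hp⟩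
  by_cases hpS : p ∈ S
  · exact (Submodule.Quotient.mk_eq_zero _).mp (hp hpS)
  · exact homRadical_eq_top (mt (hS p) hpS) ▸ Submodule.mem_top

theorem summandMultiplicity_directSum [∀ p, IsLocalRing (Module.End H (W p))] {S : Finset P}
    (hS : ∀ p, p ∈ S ↔ Nonempty (M ≃ₗ[H] W p)) :
    summandMultiplicity H (⨁ p, W p) M = S.card := by
  classical
  have e : (((⨁ p, W p) →ₗ[H] M) ⧸ homRadical H (⨁ p, W p) M) ≃ₗ[Module.End H M]
      ∀ p : S, (W p →ₗ[H] M) ⧸ homRadical H (W p) M :=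
    (Submodule.quotEquivOfEq _ _ (ker_restrictModRadical fun p ↦ (hS p).mpr).symm).trans
      ((restrictModRadical S).quotKerEquivOfSurjective (restrictModRadical_surjective S))
  calc summandMultiplicity H (⨁ p, W p) M
      = ∑ p : S, summandMultiplicity H (W p) M :=
        e.length_eq.trans (Module.length_pi_of_fintype ..)
    _ = ∑ _p : S, 1 := Finset.sum_congr rfl fun p _ ↦
        summandMultiplicity_eq_one ((hS p).mp p.2).some
    _ = S.card := by simp

end Radical

theorem summandMultiplicity_directSum_sigma {ι : Type*} {V : ι → Type*}
    [∀ i, AddCommGroup (V i)] [∀ i, Module H (V i)] [∀ i, IsLocalRing (Module.End H (V i))]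
    (hpair : ∀ i j : ι, i ≠ j → ¬ Nonempty (V i ≃ₗ[H] V j)) (m : ι → ℕ) (i : ι) :
    summandMultiplicity H (⨁ p : Σ i, Fin (m i), V p.1) (V i) = m i := by
  rw [summandMultiplicity_directSum (S := Finset.univ.map (Function.Embedding.sigmaMk i)),
    Finset.card_map, Finset.card_univ, Fintype.card_fin]
  rintro ⟨j, k⟩
  suffices i = j ↔ Nonempty (V i ≃ₗ[H] V j) by
    simp only [Finset.mem_map, Finset.mem_univ, true_and, Function.Embedding.sigmaMk_apply]
    rw [← this]
    exact ⟨fun ⟨_, h⟩ ↦ congrArg Sigma.fst h, by rintro rfl; exact ⟨k, rfl⟩⟩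
  exact ⟨by rintro rfl; exact ⟨.refl H _⟩, not_imp_not.mp (hpair i j)⟩

end Multiplicity

theorem stmt3_general {H : Type*} [Ring H] {ι : Type*} {V : ι → Type*}
    [∀ i, AddCommGroup (V i)] [∀ i, Module H (V i)] [∀ i, IsLocalRing (Module.End H (V i))]
    (hpair : ∀ i j : ι, i ≠ j → ¬ Nonempty (V i ≃ₗ[H] V j)) {m s : ι → ℕ}
    (hiso : Nonempty
      ((DirectSum (Σ i : ι, Fin (m i)) fun p => V p.1) ≃ₗ[H]
        (DirectSum (Σ i : ι, Fin (s i)) fun p => V p.1))) :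
    m = s := by
  obtain ⟨e⟩ := hiso
  ext i
  have hmult := summandMultiplicity_congr (M := V i) e
  rwa [summandMultiplicity_directSum_sigma hpair, summandMultiplicity_directSum_sigma hpair,
    Nat.cast_inj] at hmult

theorem stmt3 (F : Type*) [Field F] (H : Type*) [Ring H] [Algebra F H]
    (n : ℕ) (V : Fin n → Type*)
    [∀ i, AddCommGroup (V i)] [∀ i, Module H (V i)]
    [∀ i, Module F (V i)] [∀ i, IsScalarTower F H (V i)]
    [∀ i, FiniteDimensional F (V i)]
    (hind : ∀ i, IsIndecomposableModule H (V i))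
    (hpair : ∀ i j : Fin n, i ≠ j → ¬ Nonempty (V i ≃ₗ[H] V j))
    (m s : Fin n → ℕ)
    (hiso : Nonempty
      ((DirectSum (Σ i : Fin n, Fin (m i)) fun p => V p.1) ≃ₗ[H]
        (DirectSum (Σ i : Fin n, Fin (s i)) fun p => V p.1))) :
    m = s :=
  have (i : Fin n) := (hind i).isLocalRing_end_of_finiteDimensional F
  stmt3_general hpair hiso
end
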